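/- Let x̄ > 0, b' ∈ [0, x̄], and b̂ ∈ [0,1]. Then the function g : [0, x̄] → ℝ defined by g(w) = max(w − x̄ + b', 0) − b̂·w is quasi-monotone: for all w, ŵ ∈ [0, x̄] with w > ŵ, g(ŵ) > 0 implies g(w) ≥ 0. -/

import Mathlib

/-! A convex function that is nonpositive at the left end of its domain and positive at some later
point increases strictly from that point on, so it never becomes negative again. A call option
minus an equity share is convex in the realized value, and at `w = 0` it equals
`max (b' - x̄) 0 = 0` because the strike price `x̄ - b'` is nonnegative. -/

/-- A function is quasi-monotone on `s` if on `s` it crosses zero at most once, and from below.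
One family of securities is steeper than another when the differences of their payments are
quasi-monotone in the realized value. Touching zero again after being positive is allowed. -/
def QuasiMonotoneOn {α β : Type*} [Preorder α] [Preorder β] [Zero β] (g : α → β) (s : Set α) :
    Prop :=
  ∀ w ∈ s, ∀ what ∈ s, what < w → 0 < g what → 0 ≤ g w

section Convex

variable {𝕜 : Type*} [Field 𝕜] [LinearOrder 𝕜] [IsStrictOrderedRing 𝕜] {s : Set 𝕜}

theorem QuasiMonotoneOn.of_convexOn {β : Type*} [AddCommMonoid β] [LinearOrder β]
    [IsOrderedCancelAddMonoid β] [Module 𝕜 β] [PosSMulStrictMono 𝕜 β] {g : 𝕜 → β} {a : 𝕜}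
    (hg : ConvexOn 𝕜 s g) (ha : IsLeast s a) (hga : g a ≤ 0) : QuasiMonotoneOn g s := by
  intro w hw what hwhat hlt hpos
  have a_lt_what : a < what := (ha.2 hwhat).lt_of_ne fun h => (h ▸ hga).not_gt hpos
  have what_mem : what ∈ openSegment 𝕜 a w := Ioo_subset_openSegment ⟨a_lt_what, hlt⟩
  exact (hpos.trans (hg.lt_right_of_left_lt ha.1 hw what_mem (hga.trans_lt hpos))).le

theorem quasiMonotoneOn_sub_mul_of_convexOn {f : 𝕜 → 𝕜} (hf : ConvexOn 𝕜 s f) (hs : IsLeast s 0)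
    (hf0 : f 0 ≤ 0) (b : 𝕜) : QuasiMonotoneOn (fun w => f w - b * w) s :=
  .of_convexOn (hf.sub ((LinearMap.mulLeft 𝕜 b).concaveOn hf.1)) hs (by simpa using hf0)

theorem convexOn_max_sub_add_zero (hs : Convex 𝕜 s) (x b : 𝕜) :
    ConvexOn 𝕜 s fun w => max (w - x + b) 0 :=
  (((convexOn_id hs).sub (concaveOn_const x hs)).add_const b).sup (convexOn_const 0 hs)

theorem call_option_steeper_than_equity_general {xbar b' : 𝕜} (hb' : b' ≤ xbar) (bhat : 𝕜) :
    QuasiMonotoneOn (fun w => max (w - xbar + b') 0 - bhat * w) (Set.Ici 0) := by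
  have call_at_zero : max (0 - xbar + b') 0 ≤ 0 := by simpa using hb'
  exact quasiMonotoneOn_sub_mul_of_convexOn (convexOn_max_sub_add_zero (convex_Ici 0) xbar b')
    isLeast_Ici call_at_zero bhat

end Convex

/-- Call option is steeper than equity: for a call-option bid `b' ∈ [0,x̄]` and an equity bid
`b̂ ∈ [0,1]`, the difference `w ↦ max(w − x̄ + b', 0) − b̂·w` is quasi-monotone on `[0, x̄]`. -/
theorem call_option_steeper_than_equity
    (xbar : ℝ) (hxbar : 0 < xbar)
    (b' : ℝ) (hb' : b' ∈ Set.Icc (0:ℝ) xbar)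
    (bhat : ℝ) (hbhat : bhat ∈ Set.Icc (0:ℝ) 1) :
    ∀ w ∈ Set.Icc (0:ℝ) xbar, ∀ what ∈ Set.Icc (0:ℝ) xbar, what < w →
      0 < max (what - xbar + b') 0 - bhat * what →
        0 ≤ max (w - xbar + b') 0 - bhat * w :=
  fun w hw what hwhat => call_option_steeper_than_equity_general hb'.2 bhat w hw.1 what hwhat.1
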